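/- Let R be a commutative ring, m ≥ 0, n ≥ 1, and k = 2n(⌊m/2⌋+1). Then for all A₁,…,A_k ∈ M_n E^m, the product of ⌊m/2⌋+1 standard polynomial values s_{2n}(A₁,…,A_{2n}) · s_{2n}(A_{2n+1},…,A_{4n}) ⋯ s_{2n}(A_{k−2n+1},…,A_k) equals 0. -/

import Mathlib

/-!
By the Amitsur–Levitzki theorem the standard polynomial `s_{2n}` vanishes on `n × n` matrices over a
commutative ring. Commutators in an exterior algebra lie in the square of the augmentation ideal,
so over the exterior algebra the entries of each value of `s_{2n}` have degree at least two, and a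
product of `d` such values has entries of degree at least `2d`.

The Amitsur–Levitzki theorem is proved following Rosset. By multilinearity it suffices to treat
integer matrices `A₁, …, A_k`. If `v₁, …, v_k` generate an exterior algebra freely, then
`(∑ vₜ ⊗ Aₜ) ^ k = v₁ ∧ ⋯ ∧ v_k ⊗ s_k(A₁, …, A_k)`. The matrix `B = ∑ vₜ ⊗ Aₜ` has anticommuting
entries, so `M = B ^ 2` has commuting entries and all its positive powers have trace zero. By
Jacobi's formula the derivative of `det (1 - X M)` is then divisible by every power of `X`, so
`det (1 - X M) = 1` in the absence of torsion, and `B ^ (2n) = M ^ n = 0` by Cayley–Hamilton.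
-/

open Polynomial TensorProduct

section TracePowers

variable {ι R : Type*} [Fintype ι] [DecidableEq ι] [CommRing R]

theorem derivative_det_eq_sum_det_updateCol (M : Matrix ι ι R[X]) :
    derivative M.det = ∑ i, (M.updateCol i fun j => derivative (M j i)).det := by
  simp only [Matrix.det_apply, derivative_sum]
  rw [Finset.sum_comm]
  refine Finset.sum_congr rfl fun σ _ => ?_
  rw [Units.smul_def, derivative_smul, derivative_prod_finset, Finset.smul_sum]
  refine Finset.sum_congr rfl fun i _ => ?_
  rw [← Finset.mul_prod_erase Finset.univ (fun j => Matrix.updateCol M i _ (σ j) j)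
    (Finset.mem_univ i), Matrix.updateCol_self, mul_comm]
  congr 2
  refine Finset.prod_congr rfl fun j hj => ?_
  rw [Matrix.updateCol_ne (Finset.ne_of_mem_erase hj)]

theorem derivative_det_eq_trace_adjugate_mul (M : Matrix ι ι R[X]) :
    derivative M.det = (M.adjugate * M.map derivative).trace := by
  rw [derivative_det_eq_sum_det_updateCol]
  refine Finset.sum_congr rfl fun i _ => ?_
  rw [← Matrix.cramer_apply, Matrix.cramer_eq_adjugate_mulVec]
  rfl

theorem derivative_charpolyRev (M : Matrix ι ι R) :
    derivative M.charpolyRev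
      = -((1 - (X : R[X]) • M.map C).adjugate * M.map C).trace := by
  have hderiv : (1 - (X : R[X]) • M.map C).map derivative = -M.map C := by
    ext1 i j
    by_cases hij : i = j <;> simp [hij]
  rw [Matrix.charpolyRev, derivative_det_eq_trace_adjugate_mul, hderiv, mul_neg, Matrix.trace_neg]

theorem trace_adjugate_one_sub_X_smul_mul_pow (M : Matrix ι ι R)
    (hM : ∀ k, (M ^ (k + 1)).trace = 0) (k : ℕ) :
    ((1 - (X : R[X]) • M.map C).adjugate * M.map C).trace
      = X ^ k * ((1 - (X : R[X]) • M.map C).adjugate * M.map C ^ (k + 1)).trace := by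
  set N := M.map (C : R → R[X])
  set P := (1 - (X : R[X]) • N).adjugate
  have hrec : P = M.charpolyRev • 1 + (X : R[X]) • (P * N) := by
    have hadj : P * (1 - (X : R[X]) • N) = M.charpolyRev • 1 := Matrix.adjugate_mul _
    rw [← hadj, mul_sub, mul_one, mul_smul_comm, sub_add_cancel]
  induction k with
  | zero => simp
  | succ k ih =>
    have htrace : (N ^ (k + 1)).trace = 0 := by
      have hpow : N ^ (k + 1) = (M ^ (k + 1)).map C := (Matrix.map_pow M C (k + 1)).symm
      rw [hpow, ← C.map_zero, ← hM k]
      exact (AddMonoidHom.map_trace (C : R →+* R[X]).toAddMonoidHom _).symm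
    have hstep : (P * N ^ (k + 1)).trace = X * (P * N ^ (k + 2)).trace := by
      conv_lhs => rw [hrec]
      rw [add_mul, Matrix.trace_add, smul_mul_assoc, one_mul, Matrix.trace_smul, htrace, smul_zero,
        zero_add, smul_mul_assoc, Matrix.trace_smul, mul_assoc, ← pow_succ', smul_eq_mul]
    rw [ih, hstep, ← mul_assoc, ← pow_succ]

theorem derivative_charpolyRev_eq_zero (M : Matrix ι ι R) (hM : ∀ k, (M ^ (k + 1)).trace = 0) :
    derivative M.charpolyRev = 0 := by
  rw [derivative_charpolyRev, neg_eq_zero]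
  ext k
  exact X_pow_dvd_iff.mp
    (Dvd.intro _ (trace_adjugate_one_sub_X_smul_mul_pow M hM (k + 1)).symm) k k.lt_succ_self

theorem charpoly_eq_X_pow_of_trace_pow_eq_zero [IsAddTorsionFree R] (M : Matrix ι ι R)
    (hM : ∀ k, (M ^ (k + 1)).trace = 0) : M.charpoly = X ^ Fintype.card ι := by
  nontriviality R
  have hrev : M.charpolyRev = 1 := by
    rw [eq_C_of_derivative_eq_zero (derivative_charpolyRev_eq_zero M hM), coeff_zero_eq_eval_zero,
      Matrix.eval_charpolyRev, C_1]
  calc M.charpoly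
      = reflect M.charpoly.natDegree M.charpoly.reverse := reflect_reflect.symm
    _ = X ^ Fintype.card ι := by
      rw [Matrix.reverse_charpoly, hrev, reflect_one, Matrix.charpoly_natDegree_eq_dim]

theorem pow_card_eq_zero_of_trace_pow_eq_zero [IsAddTorsionFree R] (M : Matrix ι ι R)
    (hM : ∀ k, (M ^ (k + 1)).trace = 0) : M ^ Fintype.card ι = 0 := by
  simpa [charpoly_eq_X_pow_of_trace_pow_eq_zero M hM] using M.aeval_self_charpoly

open scoped IsMulCommutative in
theorem pow_card_eq_zero_of_trace_pow_eq_zero_of_commute {R : Type*} [Ring R] [IsAddTorsionFree R]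
    (M : Matrix ι ι R) (hcomm : ∀ i j p q, Commute (M i j) (M p q))
    (hM : ∀ k, (M ^ (k + 1)).trace = 0) : M ^ Fintype.card ι = 0 := by
  let S := Subring.closure (Set.range fun p : ι × ι => M p.1 p.2)
  have : IsMulCommutative S := Subring.isMulCommutative_closure <| by
    rintro _ ⟨⟨i, j⟩, rfl⟩ _ ⟨⟨p, q⟩, rfl⟩
    exact hcomm i j p q
  have hinj : Function.Injective S.subtype := Subtype.val_injective
  have : IsAddTorsionFree S := hinj.isAddTorsionFree S.subtype.toAddMonoidHom
  let N : Matrix ι ι S := fun i j => ⟨M i j, Subring.subset_closure ⟨(i, j), rfl⟩⟩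
  have hN : S.subtype.mapMatrix N = M := rfl
  have htrace (k : ℕ) : (N ^ (k + 1)).trace = 0 := by
    refine hinj ?_
    rw [map_zero, ← hM k, ← hN, ← map_pow]
    exact AddMonoidHom.map_trace S.subtype.toAddMonoidHom _
  rw [← hN, ← map_pow, pow_card_eq_zero_of_trace_pow_eq_zero N htrace, map_zero]

end TracePowers

section AnticommutingEntries

theorem trace_mul_eq_neg_of_anticommute {ι R : Type*} [Fintype ι] [Ring R] {C D : Matrix ι ι R}
    (hCD : ∀ i j, C i j * D j i = -(D j i * C i j)) : (C * D).trace = -(D * C).trace := by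
  simp only [Matrix.trace, Matrix.diag_apply, Matrix.mul_apply, hCD, Finset.sum_neg_distrib]
  rw [Finset.sum_comm]

variable {ι R : Type*} [Fintype ι] [DecidableEq ι] [Ring R] {B : Matrix ι ι R}

theorem commute_sq_apply_of_anticommute (hB : ∀ i j p q, B i j * B p q = -(B p q * B i j))
    (i j p q : ι) : Commute ((B ^ 2) i j) (B p q) := by
  rw [sq, Matrix.mul_apply]
  refine Commute.sum_left _ _ _ fun l _ => ?_
  rw [commute_iff_eq, mul_assoc, hB l j, mul_neg, ← mul_assoc, hB i l, neg_mul, neg_neg, mul_assoc]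

theorem commute_sq_pow_apply_of_anticommute (hB : ∀ i j p q, B i j * B p q = -(B p q * B i j))
    (k : ℕ) (i j p q : ι) : Commute (((B ^ 2) ^ k) i j) (B p q) := by
  induction k generalizing j with
  | zero => by_cases hij : i = j <;> simp [hij]
  | succ k ih =>
    rw [pow_succ, Matrix.mul_apply]
    exact Commute.sum_left _ _ _ fun l _ =>
      (ih l).mul_left (commute_sq_apply_of_anticommute hB l j p q)

theorem trace_sq_pow_eq_zero_of_anticommute [IsAddTorsionFree R]
    (hB : ∀ i j p q, B i j * B p q = -(B p q * B i j)) (k : ℕ) :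
    ((B ^ 2) ^ (k + 1)).trace = 0 := by
  have hanti (i j : ι) :
      B i j * (B * (B ^ 2) ^ k) j i = -((B * (B ^ 2) ^ k) j i * B i j) := by
    simp only [Matrix.mul_apply, Finset.mul_sum, Finset.sum_mul, ← Finset.sum_neg_distrib]
    refine Finset.sum_congr rfl fun l _ => ?_
    rw [← mul_assoc, hB, neg_mul, mul_assoc, mul_assoc,
      commute_sq_pow_apply_of_anticommute hB k l i i j]
  have hleft : B * (B * (B ^ 2) ^ k) = (B ^ 2) ^ (k + 1) := by
    rw [← mul_assoc, ← sq, pow_succ' (B ^ 2)]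
  have hright : B * (B ^ 2) ^ k * B = (B ^ 2) ^ (k + 1) := by
    rw [← pow_mul, ← pow_succ', ← pow_succ, ← pow_mul]
    rfl
  refine self_eq_neg.mp ?_
  conv_lhs => rw [← hleft, trace_mul_eq_neg_of_anticommute hanti, hright]

theorem pow_two_mul_card_eq_zero_of_anticommute [IsAddTorsionFree R]
    (hB : ∀ i j p q, B i j * B p q = -(B p q * B i j)) : B ^ (2 * Fintype.card ι) = 0 := by
  have hcomm (i j p q : ι) : Commute ((B ^ 2) i j) ((B ^ 2) p q) := by
    have hsq : (B ^ 2) p q = ∑ l, B p l * B l q := by rw [sq, Matrix.mul_apply]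
    rw [hsq]
    exact Commute.sum_right _ _ _ fun l _ =>
      (commute_sq_apply_of_anticommute hB i j p l).mul_right
        (commute_sq_apply_of_anticommute hB i j l q)
  rw [pow_mul]
  exact pow_card_eq_zero_of_trace_pow_eq_zero_of_commute (B ^ 2) hcomm
    (trace_sq_pow_eq_zero_of_anticommute hB)

end AnticommutingEntries

section StandardPolynomial

/-- The evaluation of the standard polynomial of degree `k` on an algebra, as an alternating map:
the alternatization of the `k`-fold product. -/
def standardPolynomial (R A : Type*) [CommRing R] [Ring A] [Algebra R A] (k : ℕ) :
    A [⋀^Fin k]→ₗ[R] A :=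
  MultilinearMap.alternatization (MultilinearMap.mkPiAlgebraFin R k A)

variable {R A : Type*} [CommRing R] [Ring A] [Algebra R A] {k : ℕ}

theorem standardPolynomial_apply (x : Fin k → A) :
    standardPolynomial R A k x = ∑ π : Equiv.Perm (Fin k),
      (Equiv.Perm.sign π : ℤ) • (List.ofFn fun j => x (π j)).prod := by
  simp only [standardPolynomial, MultilinearMap.alternatization_apply,
    MultilinearMap.domDomCongr_apply, MultilinearMap.mkPiAlgebraFin_apply, Units.smul_def]

theorem map_standardPolynomial {S B : Type*} [CommRing S] [Ring B] [Algebra S B] (f : A →+* B)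
    (x : Fin k → A) :
    f (standardPolynomial R A k x) = standardPolynomial S B k fun j => f (x j) := by
  simp only [standardPolynomial_apply, map_sum, map_zsmul, map_list_prod, List.map_ofFn,
    Function.comp_def]

theorem prod_ofFn_tmul {C : Type*} [Ring C] [Algebra R C] (c : Fin k → C) (a : Fin k → A) :
    (List.ofFn fun j => c j ⊗ₜ[R] a j).prod = (List.ofFn c).prod ⊗ₜ (List.ofFn a).prod := by
  induction k with
  | zero => simp [Algebra.TensorProduct.one_def]
  | succ k ih =>
    simp only [List.ofFn_succ, List.prod_cons, ih, Algebra.TensorProduct.tmul_mul_tmul]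

theorem sum_ι_tmul_pow {V : Type*} [AddCommGroup V] [Module R V] (v : Fin k → V) (a : Fin k → A) :
    (∑ t, ExteriorAlgebra.ι R (v t) ⊗ₜ[R] a t) ^ k
      = ExteriorAlgebra.ιMulti R k v ⊗ₜ standardPolynomial R A k a := by
  have hexpand : (∑ t, ExteriorAlgebra.ι R (v t) ⊗ₜ[R] a t) ^ k = ∑ f : Fin k → Fin k,
      ExteriorAlgebra.ιMulti R k (fun j => v (f j)) ⊗ₜ (List.ofFn fun j => a (f j)).prod := by
    have := (MultilinearMap.mkPiAlgebraFin R k (ExteriorAlgebra R V ⊗[R] A)).map_sum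
      fun _ t => ExteriorAlgebra.ι R (v t) ⊗ₜ[R] a t
    simpa only [MultilinearMap.mkPiAlgebraFin_apply, List.ofFn_const, List.prod_replicate,
      prod_ofFn_tmul, ExteriorAlgebra.ιMulti_apply] using this
  rw [hexpand, standardPolynomial_apply, TensorProduct.tmul_sum]
  symm
  refine Fintype.sum_of_injective (fun π : Equiv.Perm (Fin k) => ⇑π)
    DFunLike.coe_injective _ _ ?_ ?_
  · intro f hf
    have hninj : ¬ Function.Injective fun j => v (f j) := fun h =>
      hf ⟨Equiv.ofBijective f (Finite.injective_iff_bijective.mp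
        (Function.Injective.of_comp h)), rfl⟩
    rw [ExteriorAlgebra.ιMulti_eq_zero_of_not_inj hninj, TensorProduct.zero_tmul]
  · intro π
    have hperm : ExteriorAlgebra.ιMulti R k (fun j => v (π j))
        = (Equiv.Perm.sign π : ℤ) • ExteriorAlgebra.ιMulti R k v :=
      (ExteriorAlgebra.ιMulti R k).map_perm v π
    rw [hperm, TensorProduct.smul_tmul]

end StandardPolynomial

section AmitsurLevitzki

variable {ι : Type*} [Fintype ι] [DecidableEq ι] {k : ℕ}

theorem ιMulti_basisFun_ne_zero {R : Type*} [CommRing R] [Nontrivial R] :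
    ExteriorAlgebra.ιMulti R k (Pi.basisFun R (Fin k)) ≠ 0 := by
  intro hzero
  have hpow : exteriorPower.ιMulti R k (Pi.basisFun R (Fin k)) = 0 := Subtype.ext hzero
  have hdet := exteriorPower.alternatingMapLinearEquiv_apply_ιMulti
    (Pi.basisFun R (Fin k)).det (Pi.basisFun R (Fin k))
  rw [hpow, map_zero, Module.Basis.det_self] at hdet
  exact zero_ne_one hdet

theorem standardPolynomial_int_matrix_eq_zero (hk : 2 * Fintype.card ι ≤ k)
    (A : Fin k → Matrix ι ι ℤ) : standardPolynomial ℤ (Matrix ι ι ℤ) k A = 0 := by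
  let E := ExteriorAlgebra ℤ (Fin k → ℤ)
  let e := Pi.basisFun ℤ (Fin k)
  have : Module.Free ℤ E := Module.Free.of_basis e.ExteriorAlgebra
  have : IsAddTorsionFree E := IsAddTorsionFree.of_isTorsionFree ℤ E
  let B : Matrix ι ι E :=
    (matrixEquivTensor ι ℤ E).symm (∑ t, ExteriorAlgebra.ι ℤ (e t) ⊗ₜ A t)
  have hB (i j : ι) : B i j = ExteriorAlgebra.ι ℤ (∑ t, A t i j • e t) := by
    simp only [B, map_sum, matrixEquivTensor_apply_symm, Matrix.sum_apply, Matrix.smul_apply,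
      Matrix.map_apply, map_zsmul, smul_eq_mul]
    exact Finset.sum_congr rfl fun t _ => by rw [Algebra.smul_def, Algebra.commutes]
  have hBpow : B ^ k = 0 := by
    refine pow_eq_zero_of_le hk (pow_two_mul_card_eq_zero_of_anticommute fun i j p q => ?_)
    rw [hB, hB]
    exact eq_neg_of_add_eq_zero_left (ExteriorAlgebra.ι_add_mul_swap _ _)
  rw [← map_pow, sum_ι_tmul_pow, matrixEquivTensor_apply_symm] at hBpow
  ext i j
  have hentry : standardPolynomial ℤ (Matrix ι ι ℤ) k A i j • ExteriorAlgebra.ιMulti ℤ k e = 0 := by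
    simpa only [Matrix.smul_apply, Matrix.map_apply, Matrix.zero_apply, smul_eq_mul, zsmul_eq_mul,
      eq_intCast, Int.cast_comm] using congr_fun₂ hBpow i j
  exact (smul_eq_zero.mp hentry).resolve_right ιMulti_basisFun_ne_zero

/-- The **Amitsur–Levitzki theorem**. -/
theorem standardPolynomial_matrix_eq_zero {R : Type*} [CommRing R] (hk : 2 * Fintype.card ι ≤ k) :
    standardPolynomial R (Matrix ι ι R) k = 0 := by
  refine Module.Basis.ext_alternating (Matrix.stdBasis R ι ι) fun v _ => ?_
  have hunits : (fun t => Matrix.stdBasis R ι ι (v t))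
      = fun t => (Int.castRingHom R).mapMatrix (Matrix.single (v t).1 (v t).2 1) := by
    funext t
    obtain ⟨i, j⟩ := v t
    rw [Matrix.stdBasis_eq_single, RingHom.mapMatrix_apply, Matrix.map_single, map_one]
  rw [hunits, ← map_standardPolynomial (R := ℤ), standardPolynomial_int_matrix_eq_zero hk, map_zero,
    AlternatingMap.zero_apply]

theorem standardPolynomial_matrix_apply_mem {R A : Type*} [CommRing R] [Ring A] [Algebra R A]
    (I : Ideal A) [I.IsTwoSided] (hI : ∀ x y : A, x * y - y * x ∈ I)
    (hk : 2 * Fintype.card ι ≤ k) (M : Fin k → Matrix ι ι A) (i j : ι) :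
    standardPolynomial R (Matrix ι ι A) k M i j ∈ I := by
  let : CommRing (A ⧸ I) :=
    { (inferInstance : Ring (A ⧸ I)) with
      mul_comm := by
        rintro ⟨x⟩ ⟨y⟩
        exact Ideal.Quotient.eq.mpr (hI x y) }
  have hmap := map_standardPolynomial (R := R) (S := A ⧸ I) (Ideal.Quotient.mk I).mapMatrix M
  rw [standardPolynomial_matrix_eq_zero hk] at hmap
  exact Ideal.Quotient.eq_zero_iff_mem.mp (congr_fun₂ hmap i j)

end AmitsurLevitzki

theorem list_prod_matrix_apply_mem_pow {ι R A : Type*} [Fintype ι] [DecidableEq ι] [CommSemiring R]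
    [Semiring A] [Algebra R A] (P : Submodule R A) (l : List (Matrix ι ι A))
    (hl : ∀ M ∈ l, ∀ i j, M i j ∈ P) (i j : ι) : l.prod i j ∈ P ^ l.length := by
  induction l generalizing i with
  | nil =>
    rw [List.prod_nil, List.length_nil, pow_zero, Matrix.one_apply]
    split_ifs
    · exact Submodule.one_le.mp le_rfl
    · exact zero_mem _
  | cons M l ih =>
    rw [List.forall_mem_cons] at hl
    rw [List.prod_cons, Matrix.mul_apply, List.length_cons, pow_succ']
    exact sum_mem fun t _ => Submodule.mul_mem_mul (hl.1 i t) (ih hl.2 t)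

section AugmentationIdeal

variable {R M : Type*} [CommRing R] [AddCommGroup M] [Module R M]

theorem iSup_exteriorPower_eq_top : ⨆ i : ℕ, ⋀[R]^i M = ⊤ :=
  CliffordAlgebra.iSup_ι_range_eq_top 0

theorem commute_range_ι_top :
    Commute (LinearMap.range (ExteriorAlgebra.ι R (M := M))) ⊤ := by
  rw [commute_iff_eq, ← iSup_exteriorPower_eq_top, Submodule.mul_iSup, Submodule.iSup_mul]
  simp only [ExteriorAlgebra.exteriorPower, ← pow_succ, ← pow_succ']

theorem one_sup_range_ι_mul_top :
    1 ⊔ LinearMap.range (ExteriorAlgebra.ι R (M := M)) * ⊤ = ⊤ := by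
  calc 1 ⊔ LinearMap.range (ExteriorAlgebra.ι R (M := M)) * ⊤
      = ⋀[R]^0 M ⊔ ⨆ i : ℕ, ⋀[R]^(i + 1) M := by
        rw [← iSup_exteriorPower_eq_top, Submodule.mul_iSup]
        simp only [ExteriorAlgebra.exteriorPower, ← pow_succ', pow_zero]
    _ = ⨆ i : ℕ, ⋀[R]^i M := sup_iSup_nat_succ fun i => ⋀[R]^i M
    _ = ⊤ := iSup_exteriorPower_eq_top

variable (R M) in
/-- The augmentation ideal of the exterior algebra: the kernel of the projection onto its
degree-zero part. -/
abbrev exteriorAugmentationIdeal : Ideal (ExteriorAlgebra R M) :=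
  RingHom.ker (ExteriorAlgebra.algebraMapInv (R := R) (M := M))

theorem mem_exteriorAugmentationIdeal_of_mem_range_ι_mul_top {x : ExteriorAlgebra R M}
    (hx : x ∈ LinearMap.range (ExteriorAlgebra.ι R (M := M)) * ⊤) :
    x ∈ exteriorAugmentationIdeal R M := by
  have hle : LinearMap.range (ExteriorAlgebra.ι R (M := M)) * ⊤
      ≤ LinearMap.ker (ExteriorAlgebra.algebraMapInv (R := R) (M := M)).toLinearMap := by
    rw [Submodule.mul_le]
    rintro _ ⟨v, rfl⟩ y -
    simp [ExteriorAlgebra.algebraMapInv]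
  exact hle hx

theorem mem_exteriorAugmentationIdeal_iff {x : ExteriorAlgebra R M} :
    x ∈ exteriorAugmentationIdeal R M ↔
      x ∈ LinearMap.range (ExteriorAlgebra.ι R (M := M)) * ⊤ := by
  refine ⟨fun hx => ?_, mem_exteriorAugmentationIdeal_of_mem_range_ι_mul_top⟩
  have hx_top : x ∈ 1 ⊔ LinearMap.range (ExteriorAlgebra.ι R (M := M)) * ⊤ := by
    rw [one_sup_range_ι_mul_top]
    exact Submodule.mem_top
  obtain ⟨_, hr, y, hy, rfl⟩ := Submodule.mem_sup.mp hx_top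
  obtain ⟨r, rfl⟩ := Submodule.mem_one.mp hr
  have hy_inv : ExteriorAlgebra.algebraMapInv y = 0 :=
    mem_exteriorAugmentationIdeal_of_mem_range_ι_mul_top hy
  rw [RingHom.mem_ker, map_add, hy_inv, add_zero, ExteriorAlgebra.algebraMap_leftInverse] at hx
  rwa [hx, map_zero, zero_add]

theorem mem_range_ι_mul_top_sq_of_mem_exteriorAugmentationIdeal_mul_self {x : ExteriorAlgebra R M}
    (hx : x ∈ exteriorAugmentationIdeal R M * exteriorAugmentationIdeal R M) :
    x ∈ (LinearMap.range (ExteriorAlgebra.ι R (M := M)) * ⊤) ^ 2 := by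
  rw [sq]
  induction hx using Submodule.smul_induction_on' with
  | smul a ha b hb =>
    exact Submodule.mul_mem_mul (mem_exteriorAugmentationIdeal_iff.mp ha)
      (mem_exteriorAugmentationIdeal_iff.mp hb)
  | add a _ b _ iha ihb => exact add_mem iha ihb

theorem mul_sub_mul_mem_exteriorAugmentationIdeal_mul_self (x y : ExteriorAlgebra R M) :
    x * y - y * x ∈ exteriorAugmentationIdeal R M * exteriorAugmentationIdeal R M := by
  let c (z : ExteriorAlgebra R M) : ExteriorAlgebra R M :=
    algebraMap R _ (ExteriorAlgebra.algebraMapInv z)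
  have hc (z w : ExteriorAlgebra R M) : c z * w = w * c z := Algebra.commutes _ w
  have hker (z : ExteriorAlgebra R M) : z - c z ∈ exteriorAugmentationIdeal R M := by
    rw [RingHom.mem_ker, map_sub, ExteriorAlgebra.algebraMap_leftInverse, sub_self]
  -- Constant terms are central, so they may be subtracted inside the commutator.
  have hcomm : x * y - y * x = (x - c x) * (y - c y) - (y - c y) * (x - c x) := by
    simp only [sub_mul, mul_sub, hc x y, hc y x, hc x (c y)]
    abel
  rw [hcomm]
  exact sub_mem (Ideal.mul_mem_mul (hker x) (hker y)) (Ideal.mul_mem_mul (hker y) (hker x))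

end AugmentationIdeal

theorem exteriorPower_eq_bot_of_card_lt {κ R M : Type*} [Fintype κ] [CommRing R] [AddCommGroup M]
    [Module R M] (b : Module.Basis κ R M) {j : ℕ} (hj : Fintype.card κ < j) : ⋀[R]^j M = ⊥ := by
  have hzero : ExteriorAlgebra.ιMulti R (M := M) j = 0 := by
    refine Module.Basis.ext_alternating b fun v hv => ?_
    have := Fintype.card_le_of_injective v hv
    rw [Fintype.card_fin] at this
    omega
  rw [← ExteriorAlgebra.ιMulti_span_fixedDegree, Submodule.span_eq_bot]
  rintro _ ⟨v, rfl⟩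
  rw [hzero, AlternatingMap.zero_apply]

theorem grassmann_matrix_product_of_standard_polynomials_general {R M ι : Type*} [CommRing R]
    [AddCommGroup M] [Module R M] [Fintype ι] [DecidableEq ι] {k d : ℕ}
    (hM : ⋀[R]^(2 * d) M = ⊥) (hk : 2 * Fintype.card ι ≤ k)
    (A : Fin d → Fin k → Matrix ι ι (ExteriorAlgebra R M)) :
    (List.ofFn fun r => standardPolynomial R (Matrix ι ι (ExteriorAlgebra R M)) k (A r)).prod
      = 0 := by
  let P := LinearMap.range (ExteriorAlgebra.ι R (M := M)) * ⊤
  have hfactor (r : Fin d) (i j : ι) :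
      standardPolynomial R (Matrix ι ι (ExteriorAlgebra R M)) k (A r) i j ∈ P ^ 2 :=
    mem_range_ι_mul_top_sq_of_mem_exteriorAugmentationIdeal_mul_self
      (standardPolynomial_matrix_apply_mem _ mul_sub_mul_mem_exteriorAugmentationIdeal_mul_self hk
        (A r) i j)
  have hP : (P ^ 2) ^ d = ⊥ := by
    rw [← pow_mul, commute_range_ι_top.mul_pow, ← ExteriorAlgebra.exteriorPower, hM,
      Submodule.bot_mul]
  ext i j
  have hprod := list_prod_matrix_apply_mem_pow (P ^ 2) _
    (List.forall_mem_ofFn_iff.mpr hfactor) i j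
  rwa [List.length_ofFn, hP, Submodule.mem_bot] at hprod

/-- For `k = 2n(⌊m/2⌋ + 1)` and matrices `A₁, …, A_k` over the Grassmann algebra of
rank `m`, the product `s_{2n}(A₁,…,A_{2n}) ⋅ s_{2n}(A_{2n+1},…,A_{4n}) ⋯
s_{2n}(A_{k−2n+1},…,A_k)` of the `⌊m/2⌋ + 1` consecutive standard-polynomial values
vanishes. -/
theorem grassmann_matrix_product_of_standard_polynomials
    (R : Type*) [CommRing R] (m n : ℕ) (hn : 1 ≤ n)
    (A : Fin (2 * n * (m / 2 + 1)) → Matrix (Fin n) (Fin n)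
      (ExteriorAlgebra R (Fin m → R))) :
    (List.ofFn fun r : Fin (m / 2 + 1) =>
      ∑ π : Equiv.Perm (Fin (2 * n)),
        (Equiv.Perm.sign π : ℤ) •
          (List.ofFn fun j : Fin (2 * n) =>
            A ⟨2 * n * r.val + (π j).val, by
              have h1 := r.isLt
              have h2 := (π j).isLt
              calc 2 * n * r.val + (π j).val < 2 * n * (r.val + 1) := by
                    rw [Nat.mul_succ]; omega
                _ ≤ 2 * n * (m / 2 + 1) := Nat.mul_le_mul_left _ h1⟩).prod).prod
      = 0 := by
  have hlt (r : Fin (m / 2 + 1)) (j : Fin (2 * n)) : 2 * n * r + j < 2 * n * (m / 2 + 1) :=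
    calc 2 * n * r + j < 2 * n * (r + 1) := Nat.add_lt_add_left j.isLt _
      _ ≤ 2 * n * (m / 2 + 1) := Nat.mul_le_mul_left _ r.isLt
  have hvanish : ⋀[R]^(2 * (m / 2 + 1)) (Fin m → R) = ⊥ :=
    exteriorPower_eq_bot_of_card_lt (Pi.basisFun R (Fin m)) (by rw [Fintype.card_fin]; omega)
  simpa only [standardPolynomial_apply] using
    grassmann_matrix_product_of_standard_polynomials_general hvanish
      (by rw [Fintype.card_fin]) fun r j => A ⟨2 * n * r + j, hlt r j⟩
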